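/- Let N ≥ 1 and 1 ≤ M ≤ N be integers, let Σ_1,…,Σ_N ∈ ℂ be pairwise distinct and ζ_1,…,ζ_N ∈ ℂ. Let V be the N×N Vandermonde matrix V_{ij} = Σ_i^{j−1}, T = diag(ζ_1,…,ζ_N), and E = V^{−1}TV. Then the determinant of the bottom-left M×M submatrix of E (rows N−M+1,…,N, columns 1,…,M) equals ∑_{S ⊆ {1,…,N}, |S| = M} (−1)^{∑_{i∈S} i + ∑_{i=N−M+1}^{N} i} (∏_{i∈S} ζ_i) · ∏ (Σ_i − Σ_j)^{−1}, where the product runs over all pairs (i,j) with 1 ≤ j < i ≤ N such that exactly one of i, j belongs to S. -/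

import Mathlib

open Finset Matrix

/-!
Since `V * E = T * V`, multiplying `V` by the matrix formed from the first `N - M` columns of the
identity and the first `M` columns of `E` turns the bottom-left minor into `det W(ζ) / det V`,
where `W(ζ)` has the rows `(1, x, …, x ^ (N - M - 1), ζ, ζ x, …, ζ x ^ (M - 1))`, one for each node
`x` with its weight `ζ`. By Laplace expansion along the two blocks of columns,
`det W(ζ) = ∑ S, (∏ i ∈ S, ζ i) * c S` with `c S` independent of `ζ`. To find `c S`, take as
weights the values at the nodes of `p = ∏ j ∉ S, (X - x j)`: the weights outside `S` vanish, so
only the term of `S` survives, while `W` now evaluates the monic polynomials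
`1, X, …, X ^ (N - M - 1), p, X p, …, X ^ (M - 1) p` at the nodes, so its determinant is `det V`.
Hence `c S = det V / ∏ (i ∈ S, j ∉ S), (x i - x j)`. Ordering the pairs `(i, j)` decreasingly costs
one sign for each `i ∈ S`, `j ∉ S` with `i < j`, and counting these gives the exponent of `-1`.
-/

section LaplaceExpansion

variable {ι m n R : Type*} [Fintype ι] [DecidableEq ι] [CommRing R]

theorem det_eq_zero_of_card_lt_card {A : Matrix ι ι R} {rows cols : Finset ι}
    (hcard : #cols < #rows) (hA : ∀ i ∈ rows, ∀ j ∉ cols, A i j = 0) : A.det = 0 := by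
  rw [← det_transpose, det_apply]
  refine sum_eq_zero fun σ _ => ?_
  obtain ⟨i, hi, hσi⟩ : ∃ i ∈ rows, σ i ∉ cols := by
    by_contra! hσ
    exact hcard.not_ge (card_le_card_of_injOn σ hσ σ.injective.injOn)
  have hprod : ∏ i, Aᵀ (σ i) i = 0 := prod_eq_zero (mem_univ i) (hA i hi _ hσi)
  rw [hprod, smul_zero]

/-- The term of the Laplace expansion of `[P | Q]` along its two blocks of columns that takes the
rows of `Q` from `S` and those of `P` from `Sᶜ`. Keeping it as the determinant of a matrix with
the remaining entries set to zero, instead of a product of two minors, leaves its sign implicit.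
The equivalence `e` makes the block matrix square. -/
def laplaceTerm (e : ι ≃ m ⊕ n) (P : Matrix ι m R) (Q : Matrix ι n R) (S : Finset ι) : R :=
  det (of (S.piecewise (fun i => Sum.elim 0 (Q i) ∘ e) (fun i => Sum.elim (P i) 0 ∘ e)))

theorem laplaceTerm_diagonal_mul (e : ι ≃ m ⊕ n) (P : Matrix ι m R) (Q : Matrix ι n R)
    (ζ : ι → R) (S : Finset ι) :
    laplaceTerm e P (diagonal ζ * Q) S = (∏ i ∈ S, ζ i) * laplaceTerm e P Q S := by
  have hprod : ∏ i ∈ S, ζ i = ∏ i, S.piecewise ζ 1 i := by simp [prod_piecewise]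
  rw [hprod, laplaceTerm, laplaceTerm, ← det_mul_column]
  congr 1
  ext i j
  by_cases hi : i ∈ S <;> rcases hj : e j <;> simp [hi, hj]

variable [Fintype n]

theorem laplaceTerm_eq_zero (e : ι ≃ m ⊕ n) (P : Matrix ι m R) (Q : Matrix ι n R) {S : Finset ι}
    (hS : #S ≠ Fintype.card n) : laplaceTerm e P Q S = 0 := by
  let colsQ : Finset ι := univ.map (Function.Embedding.inr.trans e.symm.toEmbedding)
  have hcolsQ : #colsQ = Fintype.card n := by rw [card_map, card_univ]
  rcases hS.lt_or_gt with hlt | hgt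
  · refine det_eq_zero_of_card_lt_card (rows := Sᶜ) (cols := colsQᶜ) ?_ fun i hi j hj => ?_
    · have := card_le_univ colsQ
      rw [card_compl, card_compl]
      lia
    · rcases hej : e j with k | k
      · simp [colsQ, e.symm_apply_eq, hej] at hj
      · simp [mem_compl.1 hi, hej]
  · refine det_eq_zero_of_card_lt_card (hcolsQ.trans_lt hgt) fun i hi j hj => ?_
    rcases hej : e j with k | k
    · simp [hi, hej]
    · simp [colsQ, e.symm_apply_eq, hej] at hj

theorem det_fromCols_eq_sum_laplaceTerm (e : ι ≃ m ⊕ n) (P : Matrix ι m R) (Q : Matrix ι n R) :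
    ((fromCols P Q).submatrix id e).det =
      ∑ S ∈ powersetCard (Fintype.card n) univ, laplaceTerm e P Q S := by
  have hrows : (fromCols P Q).submatrix id e =
      of ((fun i => Sum.elim (0 : m → R) (Q i) ∘ e) + fun i => Sum.elim (P i) 0 ∘ e) := by
    ext i j
    rcases hj : e j <;> simp [hj]
  calc ((fromCols P Q).submatrix id e).det
    _ = ∑ S, laplaceTerm e P Q S := by
      rw [hrows]
      exact detRowAlternating.map_add_univ _ _
    _ = ∑ S ∈ powersetCard (Fintype.card n) univ, laplaceTerm e P Q S :=
      (sum_subset (subset_univ _) fun S _ hS =>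
        laplaceTerm_eq_zero e P Q fun h => hS (mem_powersetCard_univ.2 h)).symm

theorem det_fromCols_diagonal_mul (e : ι ≃ m ⊕ n) (P : Matrix ι m R) (Q : Matrix ι n R)
    (ζ : ι → R) :
    ((fromCols P (diagonal ζ * Q)).submatrix id e).det =
      ∑ S ∈ powersetCard (Fintype.card n) univ, (∏ i ∈ S, ζ i) * laplaceTerm e P Q S := by
  simp only [det_fromCols_eq_sum_laplaceTerm, laplaceTerm_diagonal_mul]

theorem det_mul_det_submatrix_inr [DecidableEq n] (e : ι ≃ m ⊕ n)
    (V : Matrix ι ι R) (B : Matrix ι n R) :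
    V.det * (B.submatrix (e.symm ∘ Sum.inr) id).det =
      ((fromCols (V.submatrix id (e.symm ∘ Sum.inl)) (V * B)).submatrix id e).det := by
  classical
  have : Fintype m :=
    Fintype.ofInjective (e.symm ∘ Sum.inl) (e.symm.injective.comp Sum.inl_injective)
  let Q : Matrix ι (m ⊕ n) R := fromCols ((1 : Matrix ι ι R).submatrix id (e.symm ∘ Sum.inl)) B
  have hVQ : fromCols (V.submatrix id (e.symm ∘ Sum.inl)) (V * B) = V * Q := by
    rw [mul_fromCols]
    congr 1
    exact (mul_submatrix_one (Equiv.refl ι) _ V).symm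
  have hQ : Q.submatrix e.symm id =
      fromBlocks 1 (B.submatrix (e.symm ∘ Sum.inl) id) 0 (B.submatrix (e.symm ∘ Sum.inr) id) := by
    ext (i | i) (j | j) <;> simp [Q, one_apply]
  have hdetQ : (B.submatrix (e.symm ∘ Sum.inr) id).det = (Q.submatrix id e).det := by
    rw [← det_submatrix_equiv_self e.symm, submatrix_submatrix]
    simp [hQ]
  rw [hdetQ, ← det_mul, hVQ]
  rfl

end LaplaceExpansion

section Vandermonde

open Polynomial

variable {R : Type*} [CommRing R] {K M : ℕ}

theorem vandermonde_submatrix_castLE {N : ℕ} (x : Fin N → R) (hMN : M ≤ N) :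
    (vandermonde x).submatrix id (Fin.castLE hMN) = rectVandermonde x 1 M := by
  ext i j
  simp [rectVandermonde_apply]

theorem det_fromCols_rectVandermonde_eval (x : Fin (K + M) → R) {p : R[X]} (hp : p.Monic)
    (hdeg : p.natDegree = K) :
    ((fromCols (rectVandermonde x 1 K) (diagonal (fun i => p.eval (x i)) *
      rectVandermonde x 1 M)).submatrix id finSumFinEquiv.symm).det = (vandermonde x).det := by
  nontriviality R
  rw [det_eval_matrixOfPolynomials_eq_det_vandermonde x
    (Fin.append (fun k : Fin K => X ^ (k : ℕ)) (fun k : Fin M => p * X ^ (k : ℕ)))]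
  · congr 1
    ext i j
    refine Fin.addCases (fun k => ?_) (fun k => ?_) j <;> simp [rectVandermonde_apply]
  · refine Fin.addCases (fun k => ?_) (fun k => ?_)
    · simp
    · simp [hp.natDegree_mul (monic_X_pow _), hdeg]
  · refine Fin.addCases (fun k => ?_) (fun k => ?_)
    · simp
    · simpa using hp.mul (monic_X_pow _)

theorem prod_mul_laplaceTerm_rectVandermonde (x : Fin (K + M) → R) {S : Finset (Fin (K + M))}
    (hS : #S = M) :
    (∏ p ∈ S ×ˢ Sᶜ, (x p.1 - x p.2)) *
        laplaceTerm finSumFinEquiv.symm (rectVandermonde x 1 K) (rectVandermonde x 1 M) S =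
      (vandermonde x).det := by
  nontriviality R
  let p : R[X] := ∏ j ∈ Sᶜ, (X - C (x j))
  have hdeg : p.natDegree = K := by
    rw [natDegree_finsetProd_X_sub_C_eq_card, card_compl, hS, Fintype.card_fin, Nat.add_sub_cancel]
  have hroot {i : Fin (K + M)} (hi : i ∉ S) : p.eval (x i) = 0 := by
    rw [eval_prod]
    exact prod_eq_zero (mem_compl.2 hi) (by simp)
  set c := laplaceTerm finSumFinEquiv.symm (rectVandermonde x 1 K) (rectVandermonde x 1 M)
  calc (∏ p ∈ S ×ˢ Sᶜ, (x p.1 - x p.2)) * c S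
    _ = (∏ i ∈ S, p.eval (x i)) * c S := by simp [p, prod_product, eval_prod]
    _ = ∑ T ∈ powersetCard M univ, (∏ i ∈ T, p.eval (x i)) * c T := by
      symm
      refine sum_eq_single_of_mem S (mem_powersetCard_univ.2 hS) fun T hT hTS => ?_
      obtain ⟨i, hiT, hiS⟩ : ∃ i ∈ T, i ∉ S := by
        by_contra! hsub
        exact hTS (eq_of_subset_of_card_le hsub (by rw [hS, mem_powersetCard_univ.1 hT]))
      rw [prod_eq_zero hiT (hroot hiS), zero_mul]
    _ = (vandermonde x).det := by
      rw [← det_fromCols_rectVandermonde_eval x (monic_prod_X_sub_C _ _) hdeg,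
        det_fromCols_diagonal_mul, Fintype.card_fin]

theorem det_submatrix_natAdd_castLE_conj_vandermonde {F : Type*} [Field F]
    {x : Fin (K + M) → F} (hx : Function.Injective x) (ζ : Fin (K + M) → F) :
    (((vandermonde x)⁻¹ * diagonal ζ * vandermonde x).submatrix (Fin.natAdd K)
        (Fin.castLE (Nat.le_add_left M K))).det =
      ∑ S ∈ powersetCard M univ, (∏ i ∈ S, ζ i) * ∏ p ∈ S ×ˢ Sᶜ, (x p.1 - x p.2)⁻¹ := by
  set V := vandermonde x
  set E := V⁻¹ * diagonal ζ * V with hE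
  have hV : V.det ≠ 0 := det_vandermonde_ne_zero_iff.2 hx
  have hVE : V * E.submatrix id (Fin.castLE (Nat.le_add_left M K)) =
      diagonal ζ * rectVandermonde x 1 M := by
    have hconj : V * E = diagonal ζ * V := by
      rw [hE, Matrix.mul_assoc, mul_nonsing_inv_cancel_left _ _ hV.isUnit]
    rw [← vandermonde_submatrix_castLE x (Nat.le_add_left M K)]
    exact congrArg (submatrix · id _) hconj
  have hcols : V.submatrix id (finSumFinEquiv ∘ Sum.inl) = rectVandermonde x 1 K :=
    vandermonde_submatrix_castLE x (Nat.le_add_right K M)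
  have hminor := det_mul_det_submatrix_inr finSumFinEquiv.symm V
    (E.submatrix id (Fin.castLE (Nat.le_add_left M K)))
  rw [hVE, Equiv.symm_symm, hcols, det_fromCols_diagonal_mul, Fintype.card_fin] at hminor
  refine mul_left_cancel₀ hV (hminor.trans ?_)
  rw [mul_sum]
  refine sum_congr rfl fun S hS => ?_
  rw [← prod_mul_laplaceTerm_rectVandermonde x (mem_powersetCard_univ.1 hS), prod_inv_distrib]
  have hprod : ∏ p ∈ S ×ˢ Sᶜ, (x p.1 - x p.2) ≠ 0 := prod_ne_zero_iff.2 fun p hp =>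
    sub_ne_zero.2 (hx.ne fun h =>
      mem_compl.1 (mem_product.1 hp).2 (h ▸ (mem_product.1 hp).1))
  field_simp

end Vandermonde

section Sign

theorem sum_card_filter_lt_eq_choose_two {α : Type*} [LinearOrder α] (s : Finset α) :
    ∑ i ∈ s, #{j ∈ s | i < j} = (#s).choose 2 := by
  induction s using Finset.induction_on_min with
  | empty => simp
  | insert a s ha ih =>
    have has : a ∉ s := fun h => (ha a h).false
    have hins : ∀ i ∈ s, #{j ∈ insert a s | i < j} = #{j ∈ s | i < j} := fun i hi => by
      rw [filter_insert, if_neg (ha i hi).not_gt]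
    rw [sum_insert has, sum_congr rfl hins, ih, card_insert_of_notMem has, filter_insert,
      if_neg (lt_irrefl a), filter_true_of_mem ha, Nat.choose_succ_succ' _ 1, Nat.choose_one_right]

theorem sum_Icc_add_choose_two (K M : ℕ) :
    ∑ i ∈ Icc (K + 1) (K + M), i + M.choose 2 = M * (K + M) := by
  induction M with
  | zero => simp
  | succ M ih =>
    rw [← add_assoc, sum_Icc_succ_top (by lia), Nat.choose_succ_succ' _ 1, Nat.choose_one_right]
    linarith

theorem card_filter_lt_product_compl_add_sum {K M : ℕ} {S : Finset (Fin (K + M))} (hS : #S = M) :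
    #{p ∈ S ×ˢ Sᶜ | p.1 < p.2} + ∑ i ∈ S, ((i : ℕ) + 1) = ∑ i ∈ Icc (K + 1) (K + M), i := by
  have hpairs : #{p ∈ S ×ˢ Sᶜ | p.1 < p.2} = ∑ i ∈ S, #{j ∈ Sᶜ | i < j} := by
    simp only [card_filter, sum_product]
  have hIoi (i : Fin (K + M)) :
      #{j ∈ Sᶜ | i < j} + ((i : ℕ) + 1) + #{j ∈ S | i < j} = K + M := by
    have hunion : #{j ∈ S | i < j} + #{j ∈ Sᶜ | i < j} = #(Ioi i) := by
      rw [← card_union_of_disjoint (disjoint_filter_filter disjoint_compl_right), ← filter_union,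
        union_compl, filter_lt_eq_Ioi]
    rw [Fin.card_Ioi] at hunion
    lia
  have htotal : ∑ i ∈ S, (#{j ∈ Sᶜ | i < j} + ((i : ℕ) + 1) + #{j ∈ S | i < j}) = M * (K + M) := by
    simp [hIoi, hS]
  rw [sum_add_distrib, sum_add_distrib, sum_card_filter_lt_eq_choose_two, hS, ← hpairs] at htotal
  exact Nat.add_right_cancel (htotal.trans (sum_Icc_add_choose_two K M).symm)

theorem prod_product_compl_sub {ι R : Type*} [Fintype ι] [LinearOrder ι] [CommRing R]
    (x : ι → R) (S : Finset ι) :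
    ∏ p ∈ S ×ˢ Sᶜ, (x p.1 - x p.2) =
      (-1) ^ #{p ∈ S ×ˢ Sᶜ | p.1 < p.2} *
        ∏ p : ι × ι with p.2 < p.1 ∧ ¬(p.1 ∈ S ↔ p.2 ∈ S), (x p.1 - x p.2) := by
  have hsort : ∏ p ∈ S ×ˢ Sᶜ, (x (max p.1 p.2) - x (min p.1 p.2)) =
      ∏ p : ι × ι with p.2 < p.1 ∧ ¬(p.1 ∈ S ↔ p.2 ∈ S), (x p.1 - x p.2) := by
    refine prod_nbij' (fun p => (max p.1 p.2, min p.1 p.2))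
      (fun p => if p.1 ∈ S then p else p.swap) ?_ ?_ ?_ ?_ fun _ _ => rfl <;>
      grind [mem_compl, Prod.swap_prod_mk]
  rw [← hsort, ← prod_const, prod_filter, ← prod_mul_distrib]
  refine prod_congr rfl fun p _ => ?_
  rcases lt_or_ge p.1 p.2 with h | h
  · simp [h, h.le]
  · simp [h, h.not_gt]

end Sign

theorem bottomLeft_minor_signed_formula_general {F : Type*} [Field F] {N M : ℕ} (hMN : M ≤ N)
    (x ζ : Fin N → F) (hx : Function.Injective x) :
    (((vandermonde x)⁻¹ * diagonal ζ * vandermonde x).submatrix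
        (Fin.cast (Nat.sub_add_cancel hMN) ∘ Fin.natAdd (N - M))
        (Fin.castLE hMN)).det =
      ∑ S ∈ powersetCard M (univ : Finset (Fin N)),
        (-1) ^ ((∑ i ∈ S, ((i : ℕ) + 1)) + ∑ i ∈ Icc (N - M + 1) N, i) * (∏ i ∈ S, ζ i) *
          ∏ p ∈ (univ ×ˢ univ).filter
              (fun p : Fin N × Fin N => p.2 < p.1 ∧ ¬((p.1 ∈ S) ↔ (p.2 ∈ S))),
            (x p.1 - x p.2)⁻¹ := by
  obtain ⟨K, rfl⟩ := Nat.exists_eq_add_of_le' hMN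
  have hrows : Fin.cast (Nat.sub_add_cancel hMN) ∘ Fin.natAdd (K + M - M) =
      (Fin.natAdd K : Fin M → Fin (K + M)) := by
    ext i
    simp
  rw [hrows, det_submatrix_natAdd_castLE_conj_vandermonde hx ζ]
  refine sum_congr rfl fun S hS => ?_
  have hsign : (-1 : F) ^ #{p ∈ S ×ˢ Sᶜ | p.1 < p.2} =
      (-1) ^ ((∑ i ∈ S, ((i : ℕ) + 1)) + ∑ i ∈ Icc (K + 1) (K + M), i) := by
    rw [← card_filter_lt_product_compl_add_sum (mem_powersetCard_univ.1 hS)]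
    exact neg_one_pow_congr (by grind)
  rw [prod_inv_distrib, prod_inv_distrib, prod_product_compl_sub, mul_inv, ← inv_pow, inv_neg_one,
    hsign, Nat.add_sub_cancel, univ_product_univ]
  ring

/-- the determinant of the bottom-left M×M submatrix of E = V⁻¹ T V equals
∑_{S, |S| = M} (−1)^{∑_{i∈S} i + ∑_{i=N−M+1}^N i} (∏_{i∈S} ζᵢ) ∏ (Σᵢ − Σⱼ)⁻¹,
the product over pairs j < i with exactly one of i, j in S. -/
theorem bottomLeft_minor_signed_formula
    (N M : ℕ) (hN : 1 ≤ N) (hM1 : 1 ≤ M) (hMN : M ≤ N)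
    (Sg ζ : Fin N → ℂ) (hSg : Function.Injective Sg) :
    ((((Matrix.vandermonde Sg)⁻¹ * Matrix.diagonal ζ * Matrix.vandermonde Sg).submatrix
        (fun i : Fin M => (⟨N - M + i.val, by have := i.isLt; omega⟩ : Fin N))
        (Fin.castLE hMN)).det)
      =
    ∑ S ∈ Finset.powersetCard M (Finset.univ : Finset (Fin N)),
      (-1 : ℂ) ^ ((∑ i ∈ S, ((i : ℕ) + 1)) + ∑ i ∈ Finset.Icc (N - M + 1) N, i) *
        (∏ i ∈ S, ζ i) *
        ∏ p ∈ (Finset.univ ×ˢ Finset.univ).filter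
            (fun p : Fin N × Fin N => p.2 < p.1 ∧ ¬((p.1 ∈ S) ↔ (p.2 ∈ S))),
          (Sg p.1 - Sg p.2)⁻¹ := by
  exact bottomLeft_minor_signed_formula_general hMN Sg ζ hSg
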